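/- arXiv:0810.1227 — 3 statements merged into one kernel-verified Lean document; each statement's English description precedes it below -/
import Mathlib

section
/- There is a bijection between (a) the set of standard rational (ρ,σ)-tableaux with entries in {1,…,n}, where (ρ,σ) ranges over all pairs with ρ ∈ Λ+(r−k), σ ∈ Λ+(s−k) for some 0 ≤ k ≤ min(r,s), and (b) the set of standard λ-tableaux with entries in {1,…,n}, where λ ranges over all partitions of r+(n−1)s satisfying λ_1 ≤ n and Σ_{i=1}^{s} λ_i ≥ (n−1)s. -/
open scoped BigOperators

/-- A partition of `m`: an antitone sequence of parts which vanishes from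
index `m` on and has total sum `m`. -/
structure RPartition (m : ℕ) where
  part : ℕ → ℕ
  antitone' : ∀ ⦃i j : ℕ⦄, i ≤ j → part j ≤ part i
  vanish : ∀ i, m ≤ i → part i = 0
  sum_eq : ∑ i ∈ Finset.range m, part i = m

/-- A tableau of shape `p` with entries in `{1,…,n}` (encoded as `Fin n`,
0-based); entries outside the shape are the junk value `0`. -/
structure Tab (n : ℕ) [NeZero n] (p : ℕ → ℕ) where
  entry : ℕ → ℕ → Fin n
  outside : ∀ i j, p i ≤ j → entry i j = 0

/-- A tableau is standard if its rows strictly increase from left to right and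
its columns are nondecreasing downward. -/
def IsStdTab {n : ℕ} [NeZero n] {p : ℕ → ℕ} (T : Tab n p) : Prop :=
  (∀ i j1 j2, j1 < j2 → j2 < p i → T.entry i j1 < T.entry i j2) ∧
  (∀ i j, j < p (i + 1) → T.entry i j ≤ T.entry (i + 1) j)

/-- The number of entries `≤ x` in the first row of a tableau. -/
def firstRowCount {n : ℕ} [NeZero n] {p : ℕ → ℕ} (T : Tab n p) (x : Fin n) : ℕ :=
  ((Finset.range (p 0)).filter fun j => T.entry 0 j ≤ x).card

/-- A rational tableau `(T1, T2)` is standard if both tableaux are standard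
and for every `i = 1,…,n` the number of entries `≤ i` in the first row of `T1`
plus the number of entries `≤ i` in the first row of `T2` is at most `i`. -/
def IsStdRatPair {n : ℕ} [NeZero n] {p1 p2 : ℕ → ℕ} (T1 : Tab n p1) (T2 : Tab n p2) : Prop :=
  IsStdTab T1 ∧ IsStdTab T2 ∧
    ∀ x : Fin n, firstRowCount T1 x + firstRowCount T2 x ≤ (x : ℕ) + 1


/-- A rational `(ρ,σ)`-tableau: a pair of a `ρ`-tableau and a `σ`-tableau
with `ρ ∈ Λ⁺(r−k)`, `σ ∈ Λ⁺(s−k)` for some `0 ≤ k ≤ min(r,s)` and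
`ρ₁ + σ₁ ≤ n`. -/
structure RatTabS (n r s : ℕ) [NeZero n] where
  k : ℕ
  hk : k ≤ min r s
  ρ : RPartition (r - k)
  σ : RPartition (s - k)
  hrow : ρ.part 0 + σ.part 0 ≤ n
  t1 : Tab n ρ.part
  t2 : Tab n σ.part

/-!
A standard tableau is determined by the sets of entries of its rows, and its columns are
nondecreasing exactly when each row set dominates the next one: below every `x` it has at least as
many elements. Complementation reverses dominance, so complementing the `s` row sets of a standard
`σ`-tableau and reading them from bottom to top gives again a dominance chain. The condition on the
two first rows of a rational tableau says precisely that this chain can be continued by the rows of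
the `ρ`-tableau; cutting a chain after its `s`-th row inverts the construction.
-/

open Finset

section Dominance

variable {α : Type*} [LinearOrder α]

/-- The number of elements of `A` which are at most `x`. -/
def countLE (A : Finset α) (x : α) : ℕ := #{y ∈ A | y ≤ x}

/-- The dominance (Gale) order on finite sets of possibly different sizes: whenever `B` has a `j`-th
smallest element, so does `A`, and that of `A` is at most that of `B`. It is encoded by counting,
see `dominates_image_range_iff`. -/
def Dominates (A B : Finset α) : Prop := ∀ x, countLE B x ≤ countLE A x

lemma Dominates.of_subset {A B : Finset α} (h : B ⊆ A) : Dominates A B :=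
  fun _ => card_le_card (filter_subset_filter _ h)

lemma Dominates.card_le {A B : Finset α} (h : Dominates A B) : #B ≤ #A := by
  rcases B.eq_empty_or_nonempty with rfl | hB
  · simp
  · calc #B = countLE B (B.max' hB) := by rw [countLE, filter_true_of_mem B.le_max']
      _ ≤ countLE A (B.max' hB) := h _
      _ ≤ #A := card_filter_le _ _

section Fintype

variable [Fintype α]

lemma countLE_add_countLE_compl (A : Finset α) (x : α) :
    countLE A x + countLE Aᶜ x = countLE univ x := by
  rw [countLE, countLE, ← card_union_of_disjoint (disjoint_filter_filter disjoint_compl_right),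
    ← filter_union, union_compl, countLE]

lemma dominates_compl_left_iff {A B : Finset α} :
    Dominates Bᶜ A ↔ ∀ x, countLE A x + countLE B x ≤ countLE univ x := by
  refine forall_congr' fun x => ?_
  have := countLE_add_countLE_compl B x
  lia

lemma Dominates.compl {A B : Finset α} (h : Dominates A B) : Dominates Bᶜ Aᶜ :=
  dominates_compl_left_iff.2 fun x => by
    have := countLE_add_countLE_compl A x
    have := h x
    lia

lemma dominates_compl_compl_iff {A B : Finset α} : Dominates Aᶜ Bᶜ ↔ Dominates B A :=
  ⟨fun h => by simpa only [compl_compl] using h.compl, Dominates.compl⟩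

end Fintype

lemma countLE_image_range {f : ℕ → α} {a : ℕ} (hf : StrictMonoOn f (Set.Iio a)) (x : α) :
    countLE ((range a).image f) x = #{j ∈ range a | f j ≤ x} := by
  rw [countLE, filter_image, card_image_of_injOn (hf.injOn.mono fun j hj => ?_)]
  exact mem_range.1 (mem_filter.1 hj).1

lemma dominates_image_range_iff {f g : ℕ → α} {a b : ℕ} (hf : StrictMonoOn f (Set.Iio a))
    (hg : StrictMonoOn g (Set.Iio b)) (hba : b ≤ a) :
    Dominates ((range a).image f) ((range b).image g) ↔ ∀ j < b, f j ≤ g j := by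
  simp only [Dominates, countLE_image_range hf, countLE_image_range hg]
  constructor
  · intro h j hj
    by_contra! hlt
    have lower : j + 1 ≤ #{i ∈ range b | g i ≤ g j} := by
      refine (card_range (j + 1)).ge.trans (card_le_card fun i hi => ?_)
      have hij : i ≤ j := mem_range_succ_iff.1 hi
      exact mem_filter.2 ⟨mem_range.2 (hij.trans_lt hj), hg.monotoneOn (hij.trans_lt hj) hj hij⟩
    have upper : #{i ∈ range a | f i ≤ g j} ≤ j := by
      refine (card_le_card fun i hi => ?_).trans (card_range j).le
      obtain ⟨hia, hij⟩ := mem_filter.1 hi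
      by_contra hji
      have hji : j ≤ i := not_lt.1 (mem_range.not.1 hji)
      exact (hlt.trans_le (hf.monotoneOn (hj.trans_le hba) (mem_range.1 hia) hji)).not_ge hij
    exact absurd (lower.trans ((h (g j)).trans upper)) (Nat.not_succ_le_self j)
  · intro h x
    refine card_le_card fun j hj => ?_
    obtain ⟨hjb, hjx⟩ := mem_filter.1 hj
    have hjb := mem_range.1 hjb
    exact mem_filter.2 ⟨mem_range.2 (hjb.trans_le hba), (h j hjb).trans hjx⟩

lemma eqOn_of_image_range_eq {f g : ℕ → α} {a : ℕ} (hf : StrictMonoOn f (Set.Iio a))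
    (hg : StrictMonoOn g (Set.Iio a)) (h : (range a).image f = (range a).image g) :
    Set.EqOn f g (Set.Iio a) := fun j hj =>
  le_antisymm ((dominates_image_range_iff hf hg le_rfl).1 (.of_subset h.ge) j hj)
    ((dominates_image_range_iff hg hf le_rfl).1 (.of_subset h.le) j hj)

lemma exists_strictMonoOn_image_range_eq (A : Finset α) (d : α) :
    ∃ f : ℕ → α, StrictMonoOn f (Set.Iio #A) ∧ (range #A).image f = A ∧ ∀ j, #A ≤ j → f j = d := by
  refine ⟨fun j => if h : j < #A then A.orderEmbOfFin rfl ⟨j, h⟩ else d, ?_, ?_, ?_⟩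
  · intro i hi j hj hij
    simpa [Set.mem_Iio.1 hi, Set.mem_Iio.1 hj] using hij
  · conv_rhs => rw [← A.image_orderEmbOfFin_univ rfl]
    ext y
    simp only [mem_image, mem_range, mem_univ, true_and]
    exact ⟨fun ⟨j, hj, hy⟩ => ⟨⟨j, hj⟩, by simpa [hj] using hy⟩,
      fun ⟨j, hy⟩ => ⟨j, j.2, by simpa using hy⟩⟩
  · intro j hj
    simp [hj.not_gt]

/-- A sequence of finite sets each of which dominates the next one, as the row sets of a standard
tableau do. -/
def IsDominanceChain (R : ℕ → Finset α) : Prop := ∀ i, Dominates (R i) (R (i + 1))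

lemma IsDominanceChain.antitone_card {R : ℕ → Finset α} (h : IsDominanceChain R) :
    Antitone fun i => #(R i) :=
  antitone_nat_of_succ_le fun i => (h i).card_le

end Dominance

section Partition

lemma eq_zero_of_antitone_of_hasSum {p : ℕ → ℕ} {m i : ℕ} (hp : Antitone p) (h : HasSum p m)
    (hi : m ≤ i) : p i = 0 := by
  by_contra h0
  have : i + 1 ≤ m := calc
    i + 1 = ∑ _j ∈ range (i + 1), 1 := by simp
    _ ≤ ∑ j ∈ range (i + 1), p j := sum_le_sum fun j hj =>
        (Nat.one_le_iff_ne_zero.2 h0).trans (hp (mem_range_succ_iff.1 hj))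
    _ ≤ m := sum_le_hasSum _ (fun _ _ => Nat.zero_le _) h
  lia

lemma hasSum_sum_range_of_eq_zero {p : ℕ → ℕ} {N : ℕ} (h : ∀ i, N ≤ i → p i = 0) :
    HasSum p (∑ i ∈ range N, p i) :=
  hasSum_sum_of_ne_finset_zero fun i hi => h i (not_lt.1 (mem_range.not.1 hi))

lemma hasFiniteSupport_of_summable_nat {ι : Type*} {p : ι → ℕ} (h : Summable p) :
    Function.HasFiniteSupport p := by
  have summable_int : Summable fun i => (p i : ℤ) :=
    h.map (Nat.castAddMonoidHom ℤ) continuous_of_discreteTopology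
  simpa only [Function.HasFiniteSupport, Function.support, ne_eq, Nat.cast_eq_zero] using
    summable_int.hasFiniteSupport_of_discreteTopology

lemma hasSum_iff_exists_tail {p : ℕ → ℕ} (s : ℕ) {m : ℕ} :
    HasSum p m ↔ ∃ t, HasSum (fun i => p (i + s)) t ∧ ∑ i ∈ range s, p i + t = m := by
  constructor
  · intro h
    have summable_tail : Summable fun i => p (i + s) := summable_of_hasFiniteSupport <|
      Set.Finite.preimage (add_left_injective s).injOn (hasFiniteSupport_of_summable_nat h.summable)
    obtain ⟨t, ht⟩ := summable_tail
    exact ⟨t, ht, ht.sum_range_add.unique h⟩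
  · rintro ⟨t, ht, rfl⟩
    exact ht.sum_range_add

namespace RPartition

variable {m : ℕ}

@[ext]
lemma ext {a b : RPartition m} (h : a.part = b.part) : a = b := by
  cases a
  cases b
  cases h
  rfl

lemma hasSum (a : RPartition m) : HasSum a.part m := by
  simpa only [a.sum_eq] using hasSum_sum_range_of_eq_zero a.vanish

/-- The partition of `m` with a given antitone sequence of parts. -/
def ofHasSum (p : ℕ → ℕ) (hp : Antitone p) (h : HasSum p m) : RPartition m where
  part := p
  antitone' := hp
  vanish _ hi := eq_zero_of_antitone_of_hasSum hp h hi
  sum_eq := (hasSum_sum_range_of_eq_zero fun _ hi =>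
    eq_zero_of_antitone_of_hasSum hp h hi).unique h

end RPartition

end Partition

section RowSets

/-- The sequences of row sets of standard tableaux with `m` cells and entries in `α`. -/
def tableauRows (α : Type*) [LinearOrder α] (m : ℕ) : Set (ℕ → Finset α) :=
  {R | IsDominanceChain R ∧ HasSum (fun i => #(R i)) m}

variable {n : ℕ} [NeZero n] {p : ℕ → ℕ}

/-- The set of entries of the `i`-th row of a tableau. -/
def Tab.rowSet (T : Tab n p) (i : ℕ) : Finset (Fin n) := (range (p i)).image (T.entry i)

@[ext]
lemma Tab.ext {T U : Tab n p} (h : T.entry = U.entry) : T = U := by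
  cases T
  cases U
  cases h
  rfl

lemma isStdTab_iff (hp : Antitone p) {T : Tab n p} :
    IsStdTab T ↔ (∀ i, StrictMonoOn (T.entry i) (Set.Iio (p i))) ∧ IsDominanceChain T.rowSet := by
  have rows_iff : (∀ i j₁ j₂, j₁ < j₂ → j₂ < p i → T.entry i j₁ < T.entry i j₂) ↔
      ∀ i, StrictMonoOn (T.entry i) (Set.Iio (p i)) :=
    forall_congr' fun i => ⟨fun h j₁ _ j₂ h₂ h₁₂ => h j₁ j₂ h₁₂ h₂,
      fun h j₁ j₂ h₁₂ h₂ => h (h₁₂.trans h₂) h₂ h₁₂⟩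
  rw [IsStdTab, rows_iff]
  exact and_congr_right fun h => forall_congr' fun i =>
    (dominates_image_range_iff (h i) (h (i + 1)) (hp i.le_succ)).symm

namespace IsStdTab

variable {T : Tab n p}

lemma strictMonoOn (h : IsStdTab T) (i : ℕ) : StrictMonoOn (T.entry i) (Set.Iio (p i)) :=
  fun j₁ _ j₂ h₂ h₁₂ => h.1 i j₁ j₂ h₁₂ h₂

lemma card_rowSet (h : IsStdTab T) (i : ℕ) : #(T.rowSet i) = p i := by
  rw [Tab.rowSet, card_image_of_injOn (by simpa using (h.strictMonoOn i).injOn), card_range]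

lemma countLE_rowSet_zero (h : IsStdTab T) (x : Fin n) :
    countLE (T.rowSet 0) x = firstRowCount T x :=
  countLE_image_range (h.strictMonoOn 0) x

lemma eq_of_rowSet_eq {U : Tab n p} (hT : IsStdTab T) (hU : IsStdTab U)
    (h : T.rowSet = U.rowSet) : T = U := by
  ext i j : 3
  rcases lt_or_ge j (p i) with hj | hj
  · exact eqOn_of_image_range_eq (hT.strictMonoOn i) (hU.strictMonoOn i) (congrFun h i) hj
  · rw [T.outside i j hj, U.outside i j hj]

end IsStdTab

lemma bijOn_rowSet (n m : ℕ) [NeZero n] :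
    Set.BijOn (fun y : Σ lam : RPartition m, Tab n lam.part => y.2.rowSet)
      {y | IsStdTab y.2} (tableauRows (Fin n) m) := by
  refine ⟨?_, ?_, ?_⟩
  · rintro ⟨lam, T⟩ (hT : IsStdTab T)
    exact ⟨((isStdTab_iff lam.antitone').1 hT).2, by simpa only [hT.card_rowSet] using lam.hasSum⟩
  · rintro ⟨lam, T⟩ (hT : IsStdTab T) ⟨mu, U⟩ (hU : IsStdTab U) (h : T.rowSet = U.rowSet)
    obtain rfl : lam = mu := by
      ext i
      rw [← hT.card_rowSet, h, hU.card_rowSet]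
    rw [hT.eq_of_rowSet_eq hU h]
  · rintro R ⟨chain, size⟩
    choose f hmono himage hdefault using fun i => exists_strictMonoOn_image_range_eq (R i) 0
    let lam := RPartition.ofHasSum _ chain.antitone_card size
    let T : Tab n lam.part := ⟨f, hdefault⟩
    have rows : T.rowSet = R := funext himage
    exact ⟨⟨lam, T⟩, (isStdTab_iff lam.antitone').2 ⟨hmono, rows ▸ chain⟩, rows⟩

end RowSets

section Glue

variable {α : Type*} [Fintype α]

section DecidableEq

variable [DecidableEq α]

/-- The complements of the first `s` sets of `B`, in reverse order, followed by the sets of `A`. It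
turns the row sets of a rational `(ρ,σ)`-tableau, `A` for `ρ` and `B` for `σ`, into those of a
`λ`-tableau. -/
def glue (s : ℕ) (A B : ℕ → Finset α) (i : ℕ) : Finset α :=
  if i < s then (B (s - 1 - i))ᶜ else A (i - s)

variable {s : ℕ} {A B : ℕ → Finset α}

lemma glue_add (i : ℕ) : glue s A B (i + s) = A i := by
  simp [glue]

lemma glue_self : glue s A B s = A 0 := by
  simp [glue]

lemma glue_of_add_eq {i j : ℕ} (h : i + j + 1 = s) : glue s A B i = (B j)ᶜ := by
  rw [glue, if_pos (by lia), show s - 1 - i = j by lia]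

lemma bijOn_glue (s : ℕ) :
    Set.BijOn (fun C : (ℕ → Finset α) × (ℕ → Finset α) => glue s C.1 C.2)
      {C | ∀ i, s ≤ i → C.2 i = ∅} Set.univ := by
  refine ⟨fun _ _ => Set.mem_univ _, ?_, ?_⟩
  · rintro ⟨A, B⟩ hB ⟨A', B'⟩ hB' (h : glue s A B = glue s A' B')
    refine Prod.ext (funext fun i => ?_) (funext fun j => ?_)
    · simpa only [glue_add] using congrFun h (i + s)
    · rcases lt_or_ge j s with hj | hj
      · have hij : s - 1 - j + j + 1 = s := by lia
        simpa only [glue_of_add_eq hij, compl_inj_iff] using congrFun h (s - 1 - j)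
      · exact (hB j hj).trans (hB' j hj).symm
  · intro R _
    refine ⟨(fun i => R (i + s), fun j => if j < s then (R (s - 1 - j))ᶜ else ∅),
      fun j hj => if_neg hj.not_gt, funext fun i => ?_⟩
    rcases lt_or_ge i s with hi | hi
    · have hij : i + (s - 1 - i) + 1 = s := by lia
      have hjs : s - 1 - i < s := by lia
      simp only [glue_of_add_eq hij, if_pos hjs, compl_compl, show s - 1 - (s - 1 - i) = i by lia]
    · obtain ⟨j, rfl⟩ := Nat.exists_eq_add_of_le' hi
      exact glue_add j

lemma sum_card_glue_add_sum_card :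
    ∑ i ∈ range s, #(glue s A B i) + ∑ i ∈ range s, #(B i) = Fintype.card α * s := by
  rw [← sum_range_reflect fun i => #(B i), ← sum_add_distrib]
  have row (i : ℕ) (hi : i ∈ range s) :
      #(glue s A B i) + #(B (s - 1 - i)) = Fintype.card α := by
    rw [glue, if_pos (mem_range.1 hi), card_compl_add_card]
  rw [sum_congr rfl row, sum_const, card_range, smul_eq_mul, mul_comm]

lemma hasSum_card_glue_iff [Nonempty α] (r : ℕ) (hB : ∀ i, s ≤ i → B i = ∅) :
    (HasSum (fun i => #(glue s A B i)) (r + (Fintype.card α - 1) * s) ∧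
      (Fintype.card α - 1) * s ≤ ∑ i ∈ range s, #(glue s A B i)) ↔
    ∃ k ≤ min r s, HasSum (fun i => #(A i)) (r - k) ∧ HasSum (fun i => #(B i)) (s - k) := by
  have sumB : HasSum (fun i => #(B i)) (∑ i ∈ range s, #(B i)) :=
    hasSum_sum_range_of_eq_zero fun i hi => by rw [hB i hi, card_empty]
  have total : ∑ i ∈ range s, #(glue s A B i) + ∑ i ∈ range s, #(B i) =
      (Fintype.card α - 1) * s + s := by
    rw [sum_card_glue_add_sum_card, ← Nat.succ_mul, Nat.succ_eq_add_one,
      Nat.sub_add_cancel Fintype.card_pos]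
  rw [hasSum_iff_exists_tail s]
  simp only [glue_add]
  constructor
  · rintro ⟨⟨t, ht, hsum⟩, hle⟩
    obtain ⟨k, hk⟩ := Nat.exists_eq_add_of_le hle
    refine ⟨k, by lia, ?_, ?_⟩
    · rwa [show r - k = t by lia]
    · rwa [show s - k = ∑ i ∈ range s, #(B i) by lia]
  · rintro ⟨k, hk, hA, hBk⟩
    have := sumB.unique hBk
    exact ⟨⟨r - k, hA, by lia⟩, by lia⟩

end DecidableEq

section LinearOrder

variable [LinearOrder α] {s : ℕ} {A B : ℕ → Finset α}

lemma isDominanceChain_glue_iff (hB : ∀ i, s ≤ i → B i = ∅) :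
    IsDominanceChain (glue s A B) ↔
      Dominates (B 0)ᶜ (A 0) ∧ IsDominanceChain A ∧ IsDominanceChain B := by
  constructor
  · intro h
    refine ⟨?_, fun i => ?_, fun j => ?_⟩
    · rcases s.eq_zero_or_pos with rfl | hs
      · exact .of_subset (by simp [hB 0 le_rfl])
      · have := h (s - 1)
        rwa [glue_of_add_eq (j := 0) (by lia), Nat.sub_add_cancel hs, glue_self] at this
    · have := h (i + s)
      rwa [glue_add, add_right_comm, glue_add] at this
    · rcases lt_or_ge (j + 1) s with hj | hj
      · have := h (s - 2 - j)
        rwa [glue_of_add_eq (j := j + 1) (by lia), glue_of_add_eq (j := j) (by lia),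
          dominates_compl_compl_iff] at this
      · exact .of_subset (by simp [hB (j + 1) hj])
  · rintro ⟨hlink, hA, hB⟩ i
    rcases lt_trichotomy (i + 1) s with hi | rfl | hi
    · rw [glue_of_add_eq (j := s - 2 - i + 1) (by lia), glue_of_add_eq (j := s - 2 - i) (by lia)]
      exact (hB _).compl
    · rwa [glue_of_add_eq (j := 0) rfl, glue_self]
    · obtain ⟨j, rfl⟩ := Nat.exists_eq_add_of_le' (Nat.lt_succ_iff.1 hi)
      rw [glue_add, add_right_comm, glue_add]
      exact hA j

/-- The pairs of sequences of row sets of standard rational tableaux with entries in `α`. -/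
def rationalRows (α : Type*) [Fintype α] [LinearOrder α] (r s : ℕ) :
    Set ((ℕ → Finset α) × (ℕ → Finset α)) :=
  {C | Dominates (C.2 0)ᶜ (C.1 0) ∧
    ∃ k ≤ min r s, C.1 ∈ tableauRows α (r - k) ∧ C.2 ∈ tableauRows α (s - k)}

/-- The sequences of row sets of standard tableaux with `r + (|α| - 1) s` cells, at least
`(|α| - 1) s` of them in the first `s` rows. -/
def topHeavyRows (α : Type*) [Fintype α] [LinearOrder α] (r s : ℕ) : Set (ℕ → Finset α) :=
  {R | R ∈ tableauRows α (r + (Fintype.card α - 1) * s) ∧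
    (Fintype.card α - 1) * s ≤ ∑ i ∈ range s, #(R i)}

lemma eq_empty_of_mem_rationalRows {r i : ℕ} (h : (A, B) ∈ rationalRows α r s) (hi : s ≤ i) :
    B i = ∅ := by
  obtain ⟨-, k, -, -, chain, size⟩ := h
  exact card_eq_zero.1 (eq_zero_of_antitone_of_hasSum chain.antitone_card size (by lia))

lemma glue_mem_topHeavyRows_iff [Nonempty α] {r : ℕ} (hB : ∀ i, s ≤ i → B i = ∅) :
    glue s A B ∈ topHeavyRows α r s ↔ (A, B) ∈ rationalRows α r s := by
  simp only [topHeavyRows, rationalRows, tableauRows, Set.mem_ofPred_eq, and_assoc,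
    hasSum_card_glue_iff r hB, isDominanceChain_glue_iff hB]
  grind

lemma bijOn_glue_rationalRows (α : Type*) [Fintype α] [LinearOrder α] [Nonempty α] (r s : ℕ) :
    Set.BijOn (fun C : (ℕ → Finset α) × (ℕ → Finset α) => glue s C.1 C.2)
      (rationalRows α r s) (topHeavyRows α r s) := by
  convert (bijOn_glue s).subset_right (Set.subset_univ (topHeavyRows α r s)) using 1
  ext ⟨A, B⟩
  exact ⟨fun h => have hB i hi := eq_empty_of_mem_rationalRows (i := i) h hi
      ⟨hB, (glue_mem_topHeavyRows_iff hB).2 h⟩,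
    fun ⟨hB, h⟩ => (glue_mem_topHeavyRows_iff hB).1 h⟩

end LinearOrder

end Glue

section RationalTableaux

variable {n : ℕ}

lemma countLE_univ_fin (x : Fin n) : countLE univ x = x + 1 := by
  rw [countLE, filter_ge_eq_Iic, Fin.card_Iic]

lemma isStdRatPair_iff [NeZero n] {p q : ℕ → ℕ} {T : Tab n p} {U : Tab n q} :
    IsStdRatPair T U ↔
      IsStdTab T ∧ IsStdTab U ∧ Dominates (U.rowSet 0)ᶜ (T.rowSet 0) :=
  and_congr_right fun hT => and_congr_right fun hU => by
    simp only [dominates_compl_left_iff, countLE_univ_fin, hT.countLE_rowSet_zero,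
      hU.countLE_rowSet_zero]

lemma bijOn_rowSet_rationalRows (n r s : ℕ) [NeZero n] :
    Set.BijOn (fun x : RatTabS n r s => (x.t1.rowSet, x.t2.rowSet))
      {x | IsStdRatPair x.t1 x.t2} (rationalRows (Fin n) r s) := by
  refine ⟨?_, ?_, ?_⟩
  · rintro ⟨k, hk, ρ, σ, _, T, U⟩ h
    obtain ⟨hT, hU, hlink⟩ := isStdRatPair_iff.1 h
    exact ⟨hlink, k, hk, (bijOn_rowSet n _).mapsTo (x := ⟨ρ, T⟩) hT,
      (bijOn_rowSet n _).mapsTo (x := ⟨σ, U⟩) hU⟩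
  · rintro ⟨k, hk, ρ, σ, _, T, U⟩ ⟨hT, hU, -⟩ ⟨k', hk', ρ', σ', _, T', U'⟩ ⟨hT', hU', -⟩ h
    have hTT' : T.rowSet = T'.rowSet := congrArg Prod.fst h
    have hUU' : U.rowSet = U'.rowSet := congrArg Prod.snd h
    have sizeT := ((bijOn_rowSet n _).mapsTo (x := ⟨ρ, T⟩) hT).2
    have sizeT' := ((bijOn_rowSet n _).mapsTo (x := ⟨ρ', T'⟩) hT').2
    obtain rfl : k = k' := by
      have : r - k = r - k' := sizeT.unique (hTT' ▸ sizeT')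
      lia
    cases (bijOn_rowSet n _).injOn (x₁ := ⟨ρ, T⟩) (x₂ := ⟨ρ', T'⟩) hT hT' hTT'
    cases (bijOn_rowSet n _).injOn (x₁ := ⟨σ, U⟩) (x₂ := ⟨σ', U'⟩) hU hU' hUU'
    rfl
  · rintro ⟨A, B⟩ ⟨hlink, k, hk, hA, hB⟩
    obtain ⟨⟨ρ, T⟩, hT, rfl⟩ := (bijOn_rowSet n _).surjOn hA
    obtain ⟨⟨σ, U⟩, hU, rfl⟩ := (bijOn_rowSet n _).surjOn hB
    have hrow : ρ.part 0 + σ.part 0 ≤ n := by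
      have := hlink.card_le
      rw [card_compl, Fintype.card_fin, hT.card_rowSet, hU.card_rowSet] at this
      have : #(U.rowSet 0) ≤ n := card_finset_fin_le _
      rw [hU.card_rowSet] at this
      lia
    exact ⟨⟨k, hk, ρ, σ, hrow, T, U⟩, isStdRatPair_iff.2 ⟨hT, hU, hlink⟩, rfl⟩

lemma bijOn_rowSet_topHeavyRows (n r s : ℕ) [NeZero n] :
    Set.BijOn (fun y : Σ lam : RPartition (r + (n - 1) * s), Tab n lam.part => y.2.rowSet)
      {y | IsStdTab y.2 ∧ y.1.part 0 ≤ n ∧ (n - 1) * s ≤ ∑ i ∈ range s, y.1.part i}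
      (topHeavyRows (Fin n) r s) := by
  have subset : topHeavyRows (Fin n) r s ⊆ tableauRows (Fin n) (r + (n - 1) * s) :=
    fun R hR => by simpa only [Fintype.card_fin] using hR.1
  convert (bijOn_rowSet n (r + (n - 1) * s)).subset_right subset using 1
  ext ⟨lam, T⟩
  refine and_congr_right fun (hT : IsStdTab T) => ?_
  have hmem := (bijOn_rowSet n _).mapsTo (x := ⟨lam, T⟩) hT
  have hfirst : lam.part 0 ≤ n := hT.card_rowSet 0 ▸ card_finset_fin_le _
  simp only [Set.mem_preimage, topHeavyRows, Set.mem_ofPred_eq, Fintype.card_fin, hT.card_rowSet,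
    hfirst, true_and]
  exact (and_iff_right hmem).symm

end RationalTableaux

/-- there is a bijection between the set of standard rational
`(ρ,σ)`-tableaux (over all `0 ≤ k ≤ min(r,s)`, `ρ ∈ Λ⁺(r−k)`, `σ ∈ Λ⁺(s−k)`)
with entries in `{1,…,n}` and the set of standard `λ`-tableaux with entries
in `{1,…,n}` where `λ` ranges over the partitions of `r+(n−1)s` with
`λ₁ ≤ n` and `Σ_{i=1}^s λ_i ≥ (n−1)s`. -/
theorem stmt11 (n r s : ℕ) [NeZero n] :
    Nonempty
      ({x : RatTabS n r s // IsStdRatPair x.t1 x.t2} ≃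
        {y : Σ lam : RPartition (r + (n - 1) * s), Tab n lam.part //
          IsStdTab y.2 ∧ y.1.part 0 ≤ n ∧
            (n - 1) * s ≤ ∑ i ∈ Finset.range s, y.1.part i}) :=
  ⟨(bijOn_rowSet_rationalRows n r s).equiv.trans <|
    (bijOn_glue_rationalRows (Fin n) r s).equiv.trans
      (bijOn_rowSet_topHeavyRows n r s).equiv.symm⟩
end

section
/- For every k ≥ 1, ι(𝔡et_q^{(k)}) = det_q^k in A_q(n, nk). -/
open scoped BigOperators

/-- Free algebra on two families of generators `x_{ij}` and `x*_{ij}`. -/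
abbrev FA2 (R : Type*) [CommRing R] (n : ℕ) :=
  FreeAlgebra R ((Fin n × Fin n) ⊕ (Fin n × Fin n))

/-- The generator `x_{ij}`. -/
def Xg (R : Type*) [CommRing R] (n : ℕ) (i j : Fin n) : FA2 R n :=
  FreeAlgebra.ι R (Sum.inl (i, j))

/-- The generator `x*_{ij}`. -/
def Xs (R : Type*) [CommRing R] (n : ℕ) (i j : Fin n) : FA2 R n :=
  FreeAlgebra.ι R (Sum.inr (i, j))

/-- The monomial in the `x`-generators given by a list of index pairs. -/
def xW (R : Type*) [CommRing R] (n : ℕ) (l : List (Fin n × Fin n)) : FA2 R n :=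
  (l.map fun p => Xg R n p.1 p.2).prod

/-- The monomial in the `x*`-generators given by a list of index pairs. -/
def xsW (R : Type*) [CommRing R] (n : ℕ) (l : List (Fin n × Fin n)) : FA2 R n :=
  (l.map fun p => Xs R n p.1 p.2).prod

/-- The quantum-matrix relations among the `x`-generators (parameter `q`). -/
def XRel2 (R : Type*) [CommRing R] (q : Rˣ) (n : ℕ) (h : FA2 R n) : Prop :=
  (∃ i j k : Fin n, i < j ∧
    h = Xg R n i k * Xg R n j k - (q : R) • (Xg R n j k * Xg R n i k)) ∨
  (∃ k i j : Fin n, i < j ∧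
    h = Xg R n k i * Xg R n k j - (q : R) • (Xg R n k j * Xg R n k i)) ∨
  (∃ i j k l : Fin n, i < k ∧ l < j ∧
    h = Xg R n i j * Xg R n k l - Xg R n k l * Xg R n i j) ∨
  (∃ i j k l : Fin n, i < k ∧ j < l ∧
    h = Xg R n i j * Xg R n k l - Xg R n k l * Xg R n i j -
      ((q : R) - ((q⁻¹ : Rˣ) : R)) • (Xg R n i l * Xg R n k j))

/-- The quantum-matrix relations among the `x*`-generators (parameter `q⁻¹`). -/
def XsRel2 (R : Type*) [CommRing R] (q : Rˣ) (n : ℕ) (h : FA2 R n) : Prop :=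
  (∃ i j k : Fin n, i < j ∧
    h = Xs R n i k * Xs R n j k - ((q⁻¹ : Rˣ) : R) • (Xs R n j k * Xs R n i k)) ∨
  (∃ k i j : Fin n, i < j ∧
    h = Xs R n k i * Xs R n k j - ((q⁻¹ : Rˣ) : R) • (Xs R n k j * Xs R n k i)) ∨
  (∃ i j k l : Fin n, i < k ∧ l < j ∧
    h = Xs R n i j * Xs R n k l - Xs R n k l * Xs R n i j) ∨
  (∃ i j k l : Fin n, i < k ∧ j < l ∧
    h = Xs R n i j * Xs R n k l - Xs R n k l * Xs R n i j +
      ((q : R) - ((q⁻¹ : Rˣ) : R)) • (Xs R n i l * Xs R n k j))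

/-- The generating set of the submodule `Y` of relations defining
`A_q(n;r,s)` inside `F(n,r) ⊗ F_*(n,s)` (monomials are written with all
`x`-letters in front of all `x*`-letters). -/
def Ygen (R : Type*) [CommRing R] (q : Rˣ) (n : ℕ) (r s : ℕ) : Set (FA2 R n) :=
  {a | (∃ (u v w : List (Fin n × Fin n)) (h2 : FA2 R n),
          u.length + v.length + 2 = r ∧ w.length = s ∧ XRel2 R q n h2 ∧
          a = xW R n u * h2 * xW R n v * xsW R n w) ∨
       (∃ (u w1 w2 : List (Fin n × Fin n)) (h2 : FA2 R n),
          u.length = r ∧ w1.length + w2.length + 2 = s ∧ XsRel2 R q n h2 ∧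
          a = xW R n u * xsW R n w1 * h2 * xsW R n w2) ∨
       (∃ (i j : Fin n) (u v w1 w2 : List (Fin n × Fin n)),
          i ≠ j ∧ u.length + v.length + 1 = r ∧ w1.length + w2.length + 1 = s ∧
          a = ∑ k : Fin n,
            xW R n u * Xg R n i k * xW R n v * xsW R n w1 * Xs R n j k * xsW R n w2) ∨
       (∃ (i j : Fin n) (u v w1 w2 : List (Fin n × Fin n)),
          i ≠ j ∧ u.length + v.length + 1 = r ∧ w1.length + w2.length + 1 = s ∧
          a = ∑ k : Fin n, ((q ^ (2 * ((k : ℕ) + 1)) : Rˣ) : R) •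
            (xW R n u * Xg R n k i * xW R n v * xsW R n w1 * Xs R n k j * xsW R n w2)) ∨
       (∃ (i j : Fin n) (u v w1 w2 : List (Fin n × Fin n)),
          u.length + v.length + 1 = r ∧ w1.length + w2.length + 1 = s ∧
          a = (∑ k : Fin n, ((q ^ (2 * (k : ℤ) - 2 * (i : ℤ)) : Rˣ) : R) •
                (xW R n u * Xg R n k i * xW R n v * xsW R n w1 * Xs R n k i * xsW R n w2)) -
              ∑ k : Fin n,
                xW R n u * Xg R n j k * xW R n v * xsW R n w1 * Xs R n j k * xsW R n w2)}

/-- The submodule `Y` of relations defining `A_q(n;r,s)`. -/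
def Ysub (R : Type*) [CommRing R] (q : Rˣ) (n : ℕ) (r s : ℕ) : Submodule R (FA2 R n) :=
  Submodule.span R (Ygen R q n r s)

/-- The `R`-span `F(n,r) ⊗ F_*(n,s)` of the bidegree-`(r,s)` monomials
(`x`-letters first). -/
def Frs (R : Type*) [CommRing R] (n : ℕ) (r s : ℕ) : Submodule R (FA2 R n) :=
  Submodule.span R
    {a | ∃ u v : List (Fin n × Fin n), u.length = r ∧ v.length = s ∧
          a = xW R n u * xsW R n v}

/-- The element `𝔡et_q^{(k)}` of `A_q(n;k,k)` (here: its canonical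
representative in the span of monomials), defined recursively by
`𝔡et_q^{(0)} = 1` and `𝔡et_q^{(k)} = Σ_l x_{1l}·𝔡et_q^{(k−1)}·x*_{1l}`. -/
noncomputable def detMix (R : Type*) [CommRing R] (n : ℕ) [NeZero n] : ℕ → FA2 R n
  | 0 => 1
  | (k + 1) => ∑ l : Fin n, Xg R n 0 l * detMix R n k * Xs R n 0 l

/-- Number of inversions of a permutation of `Fin k` (its Coxeter length). -/
def invCount {k : ℕ} (w : Equiv.Perm (Fin k)) : ℕ :=
  ((Finset.univ : Finset (Fin k × Fin k)).filter
    (fun p => p.1 < p.2 ∧ w p.2 < w p.1)).card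

/-- Ordered product of a tuple of elements in a (possibly noncommutative) monoid. -/
def oprod {A : Type*} [Monoid A] {k : ℕ} (g : Fin k → A) : A :=
  (List.ofFn g).prod

/-- The increasing enumeration of `{1,…,n} \ {i}` (0-based). -/
def omitIdx {n : ℕ} (i : Fin n) (t : Fin (n - 1)) : Fin n :=
  if (t : ℕ) < (i : ℕ) then ⟨t, by have := t.2; omega⟩ else ⟨(t : ℕ) + 1, by have := t.2; omega⟩

/-- The sequence `i, f 0, f 1, …` of length `n` (prepending an entry to a
sequence of length `n-1`). -/
def consSeq {n : ℕ} (i : Fin n) (f : Fin (n - 1) → Fin n) : Fin n → Fin n :=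
  fun t => if h : (t : ℕ) = 0 then i else f ⟨(t : ℕ) - 1, by have := t.2; omega⟩

/-- The defining relations of the quantum matrix bialgebra `A_q(n)`. -/
inductive QMRel (R : Type*) [CommRing R] (q : Rˣ) (n : ℕ) :
    FreeAlgebra R (Fin n × Fin n) → FreeAlgebra R (Fin n × Fin n) → Prop
  | col {i j k : Fin n} (h : i < j) :
      QMRel R q n (FreeAlgebra.ι R (i, k) * FreeAlgebra.ι R (j, k))
        ((q : R) • (FreeAlgebra.ι R (j, k) * FreeAlgebra.ι R (i, k)))
  | row {k i j : Fin n} (h : i < j) :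
      QMRel R q n (FreeAlgebra.ι R (k, i) * FreeAlgebra.ι R (k, j))
        ((q : R) • (FreeAlgebra.ι R (k, j) * FreeAlgebra.ι R (k, i)))
  | comm {i j k l : Fin n} (h1 : i < k) (h2 : l < j) :
      QMRel R q n (FreeAlgebra.ι R (i, j) * FreeAlgebra.ι R (k, l))
        (FreeAlgebra.ι R (k, l) * FreeAlgebra.ι R (i, j))
  | qcomm {i j k l : Fin n} (h1 : i < k) (h2 : j < l) :
      QMRel R q n (FreeAlgebra.ι R (i, j) * FreeAlgebra.ι R (k, l))
        (FreeAlgebra.ι R (k, l) * FreeAlgebra.ι R (i, j) +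
          ((q : R) - ((q⁻¹ : Rˣ) : R)) • (FreeAlgebra.ι R (i, l) * FreeAlgebra.ι R (k, j)))

/-- The quantum matrix bialgebra `A_q(n)`. -/
abbrev AqAlg (R : Type*) [CommRing R] (q : Rˣ) (n : ℕ) := RingQuot (QMRel R q n)

/-- The generator `x_{ij}` of `A_q(n)`. -/
def xq (R : Type*) [CommRing R] (q : Rˣ) (n : ℕ) (i j : Fin n) : AqAlg R q n :=
  RingQuot.mkAlgHom R (QMRel R q n) (FreeAlgebra.ι R (i, j))

/-- The right quantum minor `(i_1 … i_k | j_1 … j_k)_r` for an increasing row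
sequence and an arbitrary column sequence. -/
noncomputable def qMinorR (R : Type*) [CommRing R] (q : Rˣ) (n : ℕ) {k : ℕ}
    (rows cols : Fin k → Fin n) : AqAlg R q n :=
  ∑ w : Equiv.Perm (Fin k),
    (((-q) ^ invCount w : Rˣ) : R) • oprod (fun t => xq R q n (rows (w t)) (cols t))

/-- The left quantum minor `(i_1 … i_k | j_1 … j_k)_l` for an arbitrary row
sequence and an increasing column sequence. -/
noncomputable def qMinorL (R : Type*) [CommRing R] (q : Rˣ) (n : ℕ) {k : ℕ}
    (rows cols : Fin k → Fin n) : AqAlg R q n :=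
  ∑ w : Equiv.Perm (Fin k),
    (((-q) ^ invCount w : Rˣ) : R) • oprod (fun t => xq R q n (rows t) (cols (w t)))

/-- The quantum determinant. -/
noncomputable def detq (R : Type*) [CommRing R] (q : Rˣ) (n : ℕ) : AqAlg R q n :=
  qMinorR R q n (fun t => t) (fun t => t)

/-- The complementary `(n-1) × (n-1)` quantum minor `(1…î…n | 1…ĵ…n)`. -/
noncomputable def compMinor (R : Type*) [CommRing R] (q : Rˣ) (n : ℕ) (i j : Fin n) :
    AqAlg R q n :=
  qMinorR R q n (omitIdx i) (omitIdx j)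

/-- The algebra homomorphism `ι̂` from the free algebra on the `x`- and
`x*`-generators to `A_q(n)`, determined by `x_{ij} ↦ x_{ij}` and
`x*_{ij} ↦ (−q)^{j−i}·(1…î…n | 1…ĵ…n)`. -/
noncomputable def iotaHat (R : Type*) [CommRing R] (q : Rˣ) (n : ℕ) :
    FA2 R n →ₐ[R] AqAlg R q n :=
  FreeAlgebra.lift R fun g =>
    match g with
    | Sum.inl (i, j) => xq R q n i j
    | Sum.inr (i, j) => (((-q) ^ ((j : ℤ) - (i : ℤ)) : Rˣ) : R) • compMinor R q n i j

/-- The homogeneous component `A_q(n,m)`: the `R`-span in `A_q(n)` of the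
degree-`m` monomials. -/
noncomputable def AqDeg (R : Type*) [CommRing R] (q : Rˣ) (n : ℕ) (m : ℕ) :
    Submodule R (AqAlg R q n) :=
  Submodule.span R
    {a | ∃ g : List (Fin n × Fin n), g.length = m ∧ a = (g.map fun p => xq R q n p.1 p.2).prod}

/-!
The images of the `x*_{ij}` are the entries of the quantum adjugate `N` of the generic quantum
matrix `X`: expanding determinants with a repeated or permuted column gives
`N X = det_q · 1`, and, since the quantum determinant is invariant under transposition, also
`X N = det_q · 1`. Comparing `X (N X)` with `(X N) X` shows that `det_q` commutes with every
`x_{ij}`. By induction, `∑ l, x_{1l} det_q^(k-1) N_{l1} = det_q^(k-1) (X N)_{11} = det_q^k`.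
-/

section Inversions

variable {k : ℕ}

lemma invCount_eq_sum (w : Equiv.Perm (Fin k)) :
    invCount w = ∑ i, ∑ j, if i < j ∧ w j < w i then 1 else 0 := by
  rw [invCount, Finset.card_filter, Fintype.sum_prod_type]

@[simp]
lemma invCount_one : invCount (1 : Equiv.Perm (Fin k)) = 0 := by
  rw [invCount, Finset.card_eq_zero, Finset.filter_eq_empty_iff]
  exact fun p _ h => lt_asymm h.1 h.2

lemma swap_castSucc_succ_lt_iff (t : Fin k) (a b : Fin (k + 1)) :
    Equiv.swap t.castSucc t.succ a < Equiv.swap t.castSucc t.succ b ↔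
      (a < b ∧ ¬(a = t.castSucc ∧ b = t.succ)) ∨ (a = t.succ ∧ b = t.castSucc) := by
  simp only [Equiv.swap_apply_def, Fin.ext_iff, Fin.lt_def, Fin.val_castSucc, Fin.val_succ]
  split_ifs <;> (try simp only [Fin.val_castSucc, Fin.val_succ]) <;> omega

lemma invCount_mul_swap_of_lt (w : Equiv.Perm (Fin (k + 1))) (t : Fin k)
    (ht : w t.castSucc < w t.succ) :
    invCount (w * Equiv.swap t.castSucc t.succ) = invCount w + 1 := by
  let τ := Equiv.swap t.castSucc t.succ
  have hinv : Finset.univ.filter (fun p : Fin (k + 1) × Fin (k + 1) =>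
      τ p.1 < τ p.2 ∧ w p.2 < w p.1) = insert (t.succ, t.castSucc)
        (Finset.univ.filter fun p => p.1 < p.2 ∧ w p.2 < w p.1) := by
    ext ⟨a, b⟩
    simp only [τ, Finset.mem_filter_univ, Finset.mem_insert, Prod.mk.injEq,
      swap_castSucc_succ_lt_iff]
    constructor
    · tauto
    · rintro (⟨rfl, rfl⟩ | ⟨hab, hw⟩)
      · exact ⟨.inr ⟨rfl, rfl⟩, ht⟩
      · refine ⟨.inl ⟨hab, ?_⟩, hw⟩
        rintro ⟨rfl, rfl⟩
        exact lt_asymm ht hw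
  have hcard : invCount (w * τ) = (Finset.univ.filter fun p : Fin (k + 1) × Fin (k + 1) =>
      τ p.1 < τ p.2 ∧ w p.2 < w p.1).card :=
    Finset.card_equiv (τ.prodCongr τ) fun p => by simp only [Finset.mem_filter_univ]; simp [τ]
  rw [hcard, hinv, Finset.card_insert_of_notMem, invCount]
  exact fun h => lt_asymm t.castSucc_lt_succ (Finset.mem_filter_univ _ |>.mp h).1

/-- The permutation with value `p` at position `s` whose restriction to the other positions is
`e`, up to the increasing enumerations of `{i | i ≠ s}` and `{i | i ≠ p}`. It indexes the terms
of the Laplace expansions. -/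
def insertPerm (s p : Fin (k + 1)) (e : Equiv.Perm (Fin k)) : Equiv.Perm (Fin (k + 1)) :=
  (finSuccEquiv' s).trans (e.optionCongr.trans (finSuccEquiv' p).symm)

variable (s p : Fin (k + 1)) (e : Equiv.Perm (Fin k))

@[simp]
lemma insertPerm_apply_self : insertPerm s p e s = p := by
  simp [insertPerm]

@[simp]
lemma insertPerm_apply_succAbove (t : Fin k) :
    insertPerm s p e (s.succAbove t) = p.succAbove (e t) := by
  simp [insertPerm]

@[simp]
lemma insertPerm_zero_apply_succ (t : Fin k) : insertPerm 0 p e t.succ = p.succAbove (e t) := by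
  simpa only [Fin.succAbove_zero] using insertPerm_apply_succAbove 0 p e t

@[simp]
lemma insertPerm_last_apply_castSucc (t : Fin k) :
    insertPerm (Fin.last k) p e t.castSucc = p.succAbove (e t) := by
  simpa only [Fin.succAbove_last] using insertPerm_apply_succAbove (Fin.last k) p e t

lemma insertPerm_bijective :
    Function.Bijective fun x : Fin (k + 1) × Equiv.Perm (Fin k) => insertPerm s x.1 x.2 := by
  rw [Fintype.bijective_iff_injective_and_card]
  refine ⟨?_, by simp [Fintype.card_perm, Nat.factorial_succ]⟩
  rintro ⟨p, e⟩ ⟨p', e'⟩ h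
  obtain rfl : p = p' := by simpa using DFunLike.congr_fun h s
  congr 1
  ext1 t
  simpa using DFunLike.congr_fun h (s.succAbove t)

lemma insertNth_succAbove_eq_insertPerm :
    s.insertNth p p.succAbove = ⇑(insertPerm s p 1) := by
  rw [Fin.insertNth_eq_iff]
  refine ⟨by simp, funext fun t => by simp [Fin.removeNth_apply]⟩

lemma invCount_insertPerm_zero : invCount (insertPerm 0 p e) = p + invCount e := by
  have hfirst : (∑ j, if p.succAbove (e j) < p then 1 else 0) = (p : ℕ) := by
    rw [Equiv.sum_comp e fun j => if p.succAbove j < p then 1 else 0, ← Finset.card_filter]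
    simp only [Fin.succAbove_lt_iff_castSucc_lt]
    exact Fin.card_filter_val_lt.trans (min_eq_right p.is_le)
  rw [invCount_eq_sum, invCount_eq_sum, Fin.sum_univ_succ]
  congr 1
  · simpa [Fin.sum_univ_succ, -Finset.sum_boole] using hfirst
  · simp [Fin.sum_univ_succ, -Finset.sum_boole]

lemma invCount_insertPerm_last : invCount (insertPerm (Fin.last k) p e) = k - p + invCount e := by
  have hlast : (∑ j, if p < p.succAbove (e j) then 1 else 0) = k - (p : ℕ) := by
    rw [Equiv.sum_comp e fun j => if p < p.succAbove j then 1 else 0, ← Finset.card_filter]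
    simp only [Fin.lt_succAbove_iff_le_castSucc, ← not_lt]
    have hcompl := Finset.card_filter_add_card_filter_not (s := (Finset.univ : Finset (Fin k)))
      fun j => j.castSucc < p
    have hlt : (Finset.univ.filter fun j : Fin k => j.castSucc < p).card = p :=
      Fin.card_filter_val_lt.trans (min_eq_right p.is_le)
    rw [hlt, Finset.card_univ, Fintype.card_fin] at hcompl
    omega
  rw [invCount_eq_sum, invCount_eq_sum, Finset.sum_comm, Fin.sum_univ_castSucc, add_comm]
  congr 1
  · simpa [Fin.sum_univ_castSucc, -Finset.sum_boole] using hlast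
  · rw [Finset.sum_comm]
    simp [Fin.sum_univ_castSucc, Fin.le_last, -Finset.sum_boole]

end Inversions

section QuantumDeterminant

variable {R A : Type*} [CommRing R] [Ring A] [Algebra R A] (q : Rˣ) {k : ℕ}

lemma oprod_succ (g : Fin (k + 1) → A) : oprod g = g 0 * oprod fun t => g t.succ := by
  simp only [oprod, List.ofFn_succ, List.prod_cons]

lemma oprod_castSucc (g : Fin (k + 1) → A) :
    oprod g = (oprod fun t => g t.castSucc) * g (Fin.last k) := by
  simp only [oprod, List.ofFn_succ', List.concat_eq_append, List.prod_append, List.prod_singleton]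

/-- The quantum determinant `∑ w, (-q) ^ ℓ(w) M_{w 0, 0} ⋯ M_{w (k-1), k-1}` of a square matrix
over a noncommutative algebra, with the factors in the order of the columns. It is defined for
all matrices, since repeated and unsorted columns of quantum matrices have to be allowed. -/
noncomputable def qdet (M : Matrix (Fin k) (Fin k) A) : A :=
  ∑ w : Equiv.Perm (Fin k), (-q) ^ invCount w • oprod fun t => M (w t) t

lemma qdet_succ_column_zero (M : Matrix (Fin (k + 1)) (Fin (k + 1)) A) :
    qdet q M = ∑ p : Fin (k + 1), (-q) ^ (p : ℕ) •
      (M p 0 * qdet q (M.submatrix p.succAbove Fin.succ)) := by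
  rw [qdet, ← (insertPerm_bijective 0).sum_comp, Fintype.sum_prod_type]
  refine Finset.sum_congr rfl fun p _ => ?_
  simp only [qdet, Finset.mul_sum, Finset.smul_sum, invCount_insertPerm_zero, oprod_succ,
    insertPerm_apply_self, insertPerm_zero_apply_succ, Matrix.submatrix_apply, pow_add, mul_smul,
    mul_smul_comm]

lemma qdet_succ_column_last (M : Matrix (Fin (k + 1)) (Fin (k + 1)) A) :
    qdet q M = ∑ p : Fin (k + 1), (-q) ^ (k - p : ℕ) •
      (qdet q (M.submatrix p.succAbove Fin.castSucc) * M p (Fin.last k)) := by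
  rw [qdet, ← (insertPerm_bijective (Fin.last k)).sum_comp, Fintype.sum_prod_type]
  refine Finset.sum_congr rfl fun p _ => ?_
  simp only [qdet, Finset.sum_mul, Finset.smul_sum, invCount_insertPerm_last, oprod_castSucc,
    insertPerm_apply_self, insertPerm_last_apply_castSucc, Matrix.submatrix_apply, pow_add,
    mul_smul, smul_mul_assoc]

@[simp]
lemma qdet_fin_zero (M : Matrix (Fin 0) (Fin 0) A) : qdet q M = 1 := by
  simp [qdet, invCount, oprod]

lemma qdet_fin_two (M : Matrix (Fin 2) (Fin 2) A) :
    qdet q M = M 0 0 * M 1 1 - q • (M 1 0 * M 0 1) := by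
  simp [qdet_succ_column_zero, Fin.sum_univ_two, sub_eq_add_neg]

lemma qdet_eq_smul_of_adjacent_columns (c : R) {M N : Matrix (Fin (k + 1)) (Fin (k + 1)) A}
    (t : Fin k) (hother : ∀ s, s ≠ t.castSucc → s ≠ t.succ → ∀ i, N i s = M i s)
    (hminor : ∀ a b, a < b → qdet q (N.submatrix ![a, b] ![t.castSucc, t.succ]) =
      c • qdet q (M.submatrix ![a, b] ![t.castSucc, t.succ])) :
    qdet q N = c • qdet q M := by
  simp only [qdet_fin_two, Matrix.submatrix_apply, Matrix.cons_val_zero, Matrix.cons_val_one]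
    at hminor
  -- Expanding along the first or the last column leaves the two adjacent columns intact.
  induction k with
  | zero => exact t.elim0
  | succ k ih =>
    cases t using Fin.cases with
    | succ t =>
      rw [qdet_succ_column_zero, qdet_succ_column_zero q M, Finset.smul_sum]
      refine Finset.sum_congr rfl fun p _ => ?_
      rw [hother 0 (by simp [Fin.ext_iff]) (by simp [Fin.ext_iff]),
        ih (M := M.submatrix p.succAbove Fin.succ) t, mul_smul_comm, smul_comm]
      · exact fun s hs hs' i => hother s.succ (by simpa [← Fin.succ_castSucc] using hs)
          (by simpa using hs') _
      · exact fun a b hab => hminor _ _ (Fin.strictMono_succAbove p hab)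
    | zero =>
      cases k with
      | zero => simpa [qdet_fin_two] using hminor 0 1 Fin.zero_lt_one
      | succ k =>
        rw [qdet_succ_column_last, qdet_succ_column_last q M, Finset.smul_sum]
        refine Finset.sum_congr rfl fun p _ => ?_
        rw [hother (Fin.last _) (by simp [Fin.ext_iff]) (by simp [Fin.ext_iff]),
          ih (M := M.submatrix p.succAbove Fin.castSucc) 0, smul_mul_assoc, smul_comm]
        · exact fun s hs hs' i => hother s.castSucc (mt (Fin.castSucc_inj.mp ·) hs)
            (mt (Fin.castSucc_inj.mp ·) hs') _
        · exact fun a b hab => hminor _ _ (Fin.strictMono_succAbove p hab)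

end QuantumDeterminant

section QuantumMatrix

variable {R A : Type*} [CommRing R] [Ring A] [Algebra R A] {q : Rˣ}

/-- A matrix over an `R`-algebra is a quantum matrix if its entries satisfy the relations imposed
on the generators `x_{ij}` of `A_q(n)`. The rows and columns may be indexed by different ordered
sets, so that rectangular submatrices of quantum matrices are quantum matrices. -/
structure IsQuantumMatrix {ι κ : Type*} [Preorder ι] [Preorder κ] (q : Rˣ) (M : Matrix ι κ A) :
    Prop where
  col : ∀ {i j : ι} {k : κ}, i < j → M i k * M j k = q • (M j k * M i k)
  row : ∀ {k : ι} {i j : κ}, i < j → M k i * M k j = q • (M k j * M k i)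
  comm : ∀ {i k : ι} {j l : κ}, i < k → l < j → M i j * M k l = M k l * M i j
  qcomm : ∀ {i k : ι} {j l : κ}, i < k → j < l →
    M i j * M k l = M k l * M i j + ((q : R) - (q⁻¹ : Rˣ)) • (M i l * M k j)

namespace IsQuantumMatrix

section Basic

variable {ι κ : Type*} [Preorder ι] [Preorder κ] {M : Matrix ι κ A}

lemma submatrix {ι' κ' : Type*} [Preorder ι'] [Preorder κ'] (hM : IsQuantumMatrix q M)
    {r : ι' → ι} {c : κ' → κ} (hr : StrictMono r) (hc : StrictMono c) :
    IsQuantumMatrix q (M.submatrix r c) where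
  col h := hM.col (hr h)
  row h := hM.row (hc h)
  comm h h' := hM.comm (hr h) (hc h')
  qcomm h h' := hM.qcomm (hr h) (hc h')

lemma transpose (hM : IsQuantumMatrix q M) : IsQuantumMatrix q M.transpose where
  col h := hM.row h
  row h := hM.col h
  comm h h' := (hM.comm h' h).symm
  qcomm h h' := by
    simp only [Matrix.transpose_apply]
    rw [hM.qcomm h' h, hM.comm h' h]

end Basic

variable {k : ℕ}

/-! ### Transposition -/

lemma qdet_succ_row_last {M : Matrix (Fin (k + 1)) (Fin (k + 1)) A} (hM : IsQuantumMatrix q M) :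
    qdet q M = ∑ l : Fin (k + 1), (-q) ^ (k - l : ℕ) •
      (qdet q (M.submatrix Fin.castSucc l.succAbove) * M (Fin.last k) l) := by
  induction k with
  | zero => simp [qdet_succ_column_last]
  | succ k ih =>
    have hrow (p : Fin (k + 1)) :
        qdet q (M.submatrix p.castSucc.succAbove Fin.castSucc) = ∑ l : Fin (k + 1),
          (-q) ^ (k - l : ℕ) • (qdet q (M.submatrix (Fin.castSucc ∘ p.succAbove)
            (Fin.castSucc ∘ l.succAbove)) * M (Fin.last _) l.castSucc) := by
      rw [ih (hM.submatrix (Fin.strictMono_succAbove _) Fin.strictMono_castSucc)]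
      simp [Function.comp_def]
    have hcol (l : Fin (k + 1)) :
        qdet q (M.submatrix Fin.castSucc l.castSucc.succAbove) = ∑ p : Fin (k + 1),
          (-q) ^ (k - p : ℕ) • (qdet q (M.submatrix (Fin.castSucc ∘ p.succAbove)
            (Fin.castSucc ∘ l.succAbove)) * M p.castSucc (Fin.last _)) := by
      rw [qdet_succ_column_last]
      simp [Function.comp_def]
    rw [qdet_succ_column_last, Fin.sum_univ_castSucc, Fin.sum_univ_castSucc (n := k + 1)]
    simp only [hrow, hcol, Finset.sum_mul, Finset.smul_sum, Fin.succAbove_last]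
    congr 1
    rw [Finset.sum_comm]
    -- The entries in the last row and the last column commute with each other off the corner.
    refine Finset.sum_congr rfl fun l _ => Finset.sum_congr rfl fun p _ => ?_
    rw [smul_mul_assoc, smul_mul_assoc, mul_assoc, mul_assoc,
      hM.comm (Fin.castSucc_lt_last p) (Fin.castSucc_lt_last l), smul_smul, smul_smul,
      ← pow_add, ← pow_add, Fin.val_castSucc, Fin.val_castSucc]
    congr 2
    omega

lemma qdet_transpose {M : Matrix (Fin k) (Fin k) A} (hM : IsQuantumMatrix q M) :
    qdet q M.transpose = qdet q M := by
  induction k with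
  | zero => simp
  | succ k ih =>
    rw [hM.qdet_succ_row_last, qdet_succ_column_last]
    refine Finset.sum_congr rfl fun l _ => ?_
    rw [← ih (hM.submatrix Fin.strictMono_castSucc (Fin.strictMono_succAbove l)),
      Matrix.transpose_submatrix, Matrix.transpose_apply]

/-! ### Permuted and repeated columns -/

section AdjacentColumns

variable {κ : Type*} [Preorder κ] {M : Matrix (Fin (k + 1)) κ A} {c : Fin (k + 1) → κ} {t : Fin k}

lemma qdet_submatrix_eq_zero_of_adjacent (hM : IsQuantumMatrix q M)
    (ht : c t.castSucc = c t.succ) : qdet q (M.submatrix id c) = 0 := by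
  rw [qdet_eq_smul_of_adjacent_columns q (0 : R) t (M := M.submatrix id c) (fun _ _ _ _ => rfl),
    zero_smul]
  intro a b hab
  simp only [qdet_fin_two, Matrix.submatrix_apply, Matrix.cons_val_zero, Matrix.cons_val_one,
    id_eq, ht, hM.col hab, sub_self, smul_zero]

lemma qdet_submatrix_comp_swap (hM : IsQuantumMatrix q M) (ht : c t.castSucc < c t.succ) :
    qdet q (M.submatrix id (c ∘ Equiv.swap t.castSucc t.succ)) =
      -q • qdet q (M.submatrix id c) := by
  refine qdet_eq_smul_of_adjacent_columns q (-q : R) t (fun s hs hs' i => ?_) fun a b hab => ?_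
  · simp [Equiv.swap_apply_of_ne_of_ne hs hs']
  · simp only [qdet_fin_two, Matrix.submatrix_apply, Matrix.cons_val_zero, Matrix.cons_val_one,
      Function.comp_apply, Equiv.swap_apply_left, Equiv.swap_apply_right, id_eq, Units.smul_def]
    rw [hM.qcomm hab ht, hM.comm hab ht]
    have hq : (q : R) * (q⁻¹ : Rˣ) = 1 := q.mul_inv
    linear_combination (norm := module) -hq • (M b (c t.castSucc) * M a (c t.succ))

end AdjacentColumns

lemma qdet_submatrix_comp_perm {κ : Type*} [PartialOrder κ] {M : Matrix (Fin (k + 1)) κ A}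
    {c : Fin (k + 1) → κ} (hM : IsQuantumMatrix q M) (hc : Monotone c)
    (σ : Equiv.Perm (Fin (k + 1))) :
    qdet q (M.submatrix id (c ∘ σ)) = (-q) ^ invCount σ • qdet q (M.submatrix id c) := by
  let P (σ : Equiv.Perm (Fin (k + 1))) : Prop :=
    qdet q (M.submatrix id (c ∘ σ)) = (-q) ^ invCount σ • qdet q (M.submatrix id c)
  have swap_iff (σ : Equiv.Perm (Fin (k + 1))) (t : Fin k) (h : σ t.castSucc < σ t.succ) :
      P (σ * Equiv.swap t.castSucc t.succ) ↔ P σ := by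
    have hswap : qdet q (M.submatrix id (c ∘ (σ * Equiv.swap t.castSucc t.succ : Equiv.Perm _))) =
        -q • qdet q (M.submatrix id (c ∘ σ)) := by
      rcases (hc h.le).lt_or_eq with hlt | heq
      · exact hM.qdet_submatrix_comp_swap (c := c ∘ σ) hlt
      · rw [hM.qdet_submatrix_eq_zero_of_adjacent (t := t) (by simpa using heq.symm),
          hM.qdet_submatrix_eq_zero_of_adjacent (t := t) heq, smul_zero]
    simp only [P]
    rw [hswap, invCount_mul_swap_of_lt σ t h, pow_succ', mul_smul, smul_left_cancel_iff]
  have hσ : σ ∈ Submonoid.closure (Set.range fun t : Fin k => Equiv.swap t.castSucc t.succ) := by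
    simp [Equiv.Perm.mclosure_swap_castSucc_succ]
  change P σ
  induction hσ using Submonoid.closure_induction_right with
  | one => simp [P]
  | mul_right σ _ _ ht ih =>
    obtain ⟨t, rfl⟩ := ht
    rcases (σ.injective.ne t.castSucc_lt_succ.ne).lt_or_gt with h | h
    · exact (swap_iff σ t h).mpr ih
    · refine (swap_iff _ t ?_).mp ?_
      · simpa using h
      · simpa [mul_assoc] using ih

lemma qdet_submatrix_eq_zero_of_not_injective {κ : Type*} [LinearOrder κ]
    {M : Matrix (Fin (k + 1)) κ A} {c : Fin (k + 1) → κ} (hM : IsQuantumMatrix q M)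
    (hc : ¬Function.Injective c) : qdet q (M.submatrix id c) = 0 := by
  -- Sorting the columns makes two equal ones adjacent.
  have hmono := Tuple.monotone_sort c
  have hinj : ¬StrictMono (c ∘ Tuple.sort c) := fun h =>
    hc ((Equiv.injective_comp _ c).mp h.injective)
  rw [Fin.strictMono_iff_lt_succ, not_forall] at hinj
  obtain ⟨t, ht⟩ := hinj
  have hadj := (hmono t.castSucc_lt_succ.le).eq_of_not_lt ht
  have hperm := hM.qdet_submatrix_comp_perm hmono (Tuple.sort c)⁻¹
  rwa [hM.qdet_submatrix_eq_zero_of_adjacent hadj, smul_zero, Function.comp_assoc,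
    ← Equiv.Perm.coe_mul, mul_inv_cancel, Equiv.Perm.coe_one, Function.comp_id] at hperm

lemma qdet_submatrix_insertNth {M : Matrix (Fin (k + 1)) (Fin (k + 1)) A}
    (hM : IsQuantumMatrix q M) (s j l : Fin (k + 1)) :
    qdet q (M.submatrix id (s.insertNth j l.succAbove)) =
      if j = l then (-q) ^ invCount (insertPerm s l 1) • qdet q M else 0 := by
  split_ifs with hjl
  · subst hjl
    rw [insertNth_succAbove_eq_insertPerm]
    exact hM.qdet_submatrix_comp_perm monotone_id _
  · refine hM.qdet_submatrix_eq_zero_of_not_injective fun hinj => ?_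
    obtain ⟨i, hi⟩ := Fin.exists_succAbove_eq hjl
    exact Fin.succAbove_ne s i (hinj (by simpa using hi))

end IsQuantumMatrix

/-! ### The adjugate -/

variable {m : ℕ}

variable (q) in
/-- The quantum adjugate, a two-sided inverse of the quantum matrix `M` up to the factor `qdet q M`.
As for the classical adjugate the indices are transposed: the `(l, i)` entry omits row `i` and
column `l`, and is the image of `x*_{il}` when `M` is the matrix of the `x_{ij}`. -/
noncomputable def qadjugate (M : Matrix (Fin (m + 1)) (Fin (m + 1)) A) :
    Matrix (Fin (m + 1)) (Fin (m + 1)) A :=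
  .of fun l i => (-q) ^ ((l : ℤ) - i) • qdet q (M.submatrix i.succAbove l.succAbove)

namespace IsQuantumMatrix

variable {M : Matrix (Fin (m + 1)) (Fin (m + 1)) A}

lemma qadjugate_mul (hM : IsQuantumMatrix q M) :
    qadjugate q M * M = .diagonal fun _ => qdet q M := by
  ext l j
  have hexp : qdet q (M.submatrix id ((Fin.last m).insertNth j l.succAbove)) =
      ∑ i : Fin (m + 1), (-q) ^ (m - i : ℕ) •
        (qdet q (M.submatrix i.succAbove l.succAbove) * M i j) := by
    simp [qdet_succ_column_last, Function.comp_def]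
  have hsum : (qadjugate q M * M) l j = (-q) ^ ((l : ℤ) - m) •
      qdet q (M.submatrix id ((Fin.last m).insertNth j l.succAbove)) := by
    rw [hexp, Matrix.mul_apply, Finset.smul_sum]
    refine Finset.sum_congr rfl fun i _ => ?_
    rw [qadjugate, Matrix.of_apply, smul_mul_assoc, smul_smul, ← zpow_natCast, ← zpow_add,
      Nat.cast_sub i.is_le]
    congr 2
    ring
  rw [hsum, hM.qdet_submatrix_insertNth, invCount_insertPerm_last, invCount_one]
  rcases eq_or_ne l j with rfl | h
  · rw [if_pos rfl, Matrix.diagonal_apply_eq, smul_smul, ← zpow_natCast, ← zpow_add, add_zero,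
      Nat.cast_sub l.is_le, sub_add_sub_cancel, sub_self, zpow_zero, one_smul]
  · rw [if_neg h.symm, smul_zero, Matrix.diagonal_apply_ne _ h]

lemma mul_qadjugate (hM : IsQuantumMatrix q M) :
    M * qadjugate q M = .diagonal fun _ => qdet q M := by
  ext j i
  have hexp : qdet q (M.transpose.submatrix id (Fin.insertNth 0 j i.succAbove)) =
      ∑ l : Fin (m + 1), (-q) ^ (l : ℕ) •
        (M j l * qdet q (M.submatrix i.succAbove l.succAbove)) := by
    rw [qdet_succ_column_zero]
    refine Finset.sum_congr rfl fun l _ => ?_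
    rw [← (hM.submatrix (Fin.strictMono_succAbove i) (Fin.strictMono_succAbove l)).qdet_transpose]
    simp [Function.comp_def]
  have hsum : (M * qadjugate q M) j i = (-q) ^ (-(i : ℤ)) •
      qdet q (M.transpose.submatrix id (Fin.insertNth 0 j i.succAbove)) := by
    rw [hexp, Matrix.mul_apply, Finset.smul_sum]
    refine Finset.sum_congr rfl fun l _ => ?_
    rw [qadjugate, Matrix.of_apply, mul_smul_comm, smul_smul, ← zpow_natCast, ← zpow_add,
      neg_add_eq_sub]
  rw [hsum, hM.transpose.qdet_submatrix_insertNth, hM.qdet_transpose, invCount_insertPerm_zero,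
    invCount_one, Matrix.diagonal_apply]
  split_ifs with h
  · rw [smul_smul, ← zpow_natCast, ← zpow_add, add_zero, neg_add_cancel, zpow_zero, one_smul]
  · exact smul_zero _

lemma commute_qdet (hM : IsQuantumMatrix q M) (i j : Fin (m + 1)) :
    Commute (M i j) (qdet q M) := by
  have h : M * (qadjugate q M * M) = M * qadjugate q M * M := (Matrix.mul_assoc _ _ _).symm
  rw [hM.qadjugate_mul, hM.mul_qadjugate] at h
  simpa only [commute_iff_eq, Matrix.mul_diagonal, Matrix.diagonal_mul] using
    Matrix.ext_iff.mpr h i j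

end IsQuantumMatrix

end QuantumMatrix

section Iota

variable {R : Type*} [CommRing R] (q : Rˣ) (n m : ℕ)

lemma isQuantumMatrix_xq : IsQuantumMatrix q (Matrix.of (xq R q n)) where
  col h := by
    simpa only [map_mul, map_smul, Units.smul_def, Matrix.of_apply, xq] using
      RingQuot.mkAlgHom_rel R (QMRel.col (q := q) h)
  row h := by
    simpa only [map_mul, map_smul, Units.smul_def, Matrix.of_apply, xq] using
      RingQuot.mkAlgHom_rel R (QMRel.row (q := q) h)
  comm h h' := by
    simpa only [map_mul, Matrix.of_apply, xq] using
      RingQuot.mkAlgHom_rel R (QMRel.comm (q := q) h h')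
  qcomm h h' := by
    simpa only [map_mul, map_add, map_smul, Matrix.of_apply, xq] using
      RingQuot.mkAlgHom_rel R (QMRel.qcomm (q := q) h h')

lemma omitIdx_eq_succAbove (i : Fin (m + 1)) : omitIdx i = i.succAbove := by
  ext t
  simp only [omitIdx, Fin.succAbove, Fin.lt_def, Fin.val_castSucc]
  split_ifs <;> rfl

lemma detq_eq_qdet : detq R q n = qdet q (Matrix.of (xq R q n)) := rfl

lemma iotaHat_Xg (i j : Fin n) : iotaHat R q n (Xg R n i j) = xq R q n i j :=
  FreeAlgebra.lift_ι_apply _ _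

lemma iotaHat_Xs (i j : Fin (m + 1)) :
    iotaHat R q (m + 1) (Xs R (m + 1) i j) = qadjugate q (Matrix.of (xq R q (m + 1))) j i := by
  have h : iotaHat R q (m + 1) (Xs R (m + 1) i j) =
      (-q) ^ ((j : ℤ) - i) • compMinor R q (m + 1) i j := FreeAlgebra.lift_ι_apply _ _
  rw [h, compMinor, omitIdx_eq_succAbove, omitIdx_eq_succAbove]
  rfl

lemma sum_xq_mul_iotaHat_Xs (i : Fin (m + 1)) :
    ∑ l, xq R q (m + 1) i l * iotaHat R q (m + 1) (Xs R (m + 1) i l) = detq R q (m + 1) := by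
  have h := Matrix.ext_iff.mpr (isQuantumMatrix_xq q (m + 1)).mul_qadjugate i i
  simpa only [iotaHat_Xs, detq_eq_qdet, Matrix.mul_apply, Matrix.of_apply,
    Matrix.diagonal_apply_eq] using h

end Iota

/-- `ι(𝔡et_q^{(k)}) = det_q^k` in `A_q(n, nk)` for every `k ≥ 1`. -/
theorem stmt13 (R : Type*) [CommRing R] (q : Rˣ) (n : ℕ) [NeZero n] (k : ℕ) (hk : 1 ≤ k) :
    iotaHat R q n (detMix R n k) = detq R q n ^ k := by
  obtain ⟨m, rfl⟩ := Nat.exists_eq_succ_of_ne_zero (NeZero.ne n)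
  clear hk
  induction k with
  | zero => simp [detMix]
  | succ k ih =>
    have hcomm (l : Fin (m + 1)) : Commute (xq R q (m + 1) 0 l) (detq R q (m + 1) ^ k) :=
      ((isQuantumMatrix_xq q (m + 1)).commute_qdet 0 l).pow_right k
    calc iotaHat R q (m + 1) (detMix R (m + 1) (k + 1))
        = ∑ l, xq R q (m + 1) 0 l * detq R q (m + 1) ^ k *
            iotaHat R q (m + 1) (Xs R (m + 1) 0 l) := by
          simp only [detMix, map_sum, map_mul, iotaHat_Xg, ih]
      _ = detq R q (m + 1) ^ k *
            ∑ l, xq R q (m + 1) 0 l * iotaHat R q (m + 1) (Xs R (m + 1) 0 l) := by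
          simp only [(hcomm _).eq, mul_assoc, Finset.mul_sum]
      _ = detq R q (m + 1) ^ (k + 1) := by
          rw [sum_xq_mul_iotaHat_Xs, pow_succ]
end

section
/- Let k ≥ 2 and let C and D be disjoint finite sets of integers with |C| = k−1 and C nonempty. Let c_max = max C, D_− = {d ∈ D : d < c_max}, and for an integer x set m(x) = |{c ∈ C : c > x}|. Then for every subset S ⊆ C ∪ D_− with |S| = k there exists d ∈ D ∩ S such that m(d) = |{s ∈ S : s > d}|. -/
/-!
Let `|C| < |S|` and `a = min S`. If fewer elements of `C` than of `S` lie above `a`,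
discard everything up to `a` from both sets and repeat: counts above any later threshold are
unchanged. Otherwise at least `|S| - 1 ≥ |C|` elements of `C` lie above `a`, so all of `C` does,
which forces `a ∉ C` and `|C| = |S| - 1`.
-/

theorem filter_lt_filter_lt_of_le {α : Type*} [Preorder α] [DecidableLT α] {a b : α}
    (hab : a ≤ b) (s : Finset α) : {x ∈ {x ∈ s | a < x} | b < x} = {x ∈ s | b < x} := by
  rw [Finset.filter_filter]
  exact Finset.filter_congr fun x _ ↦ and_iff_right_of_imp hab.trans_lt

theorem filter_lt_insert_of_forall_lt {α : Type*} [Preorder α] [DecidableEq α] [DecidableLT α]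
    {a : α} {s : Finset α} (ha : ∀ x ∈ s, a < x) : {x ∈ insert a s | a < x} = s := by
  rw [Finset.filter_insert, if_neg (lt_irrefl a), Finset.filter_true_of_mem ha]

theorem stmt17_general {α : Type*} [LinearOrder α] {C S : Finset α} (hCS : C.card < S.card) :
    ∃ x ∈ S \ C, {c ∈ C | x < c}.card = {s ∈ S | x < s}.card := by
  induction S using Finset.induction_on_min generalizing C with
  | empty => exact absurd hCS (Nat.not_lt_zero _)
  | insert a S ha ih =>
    have ha_notMem : a ∉ S := fun h ↦ (ha a h).false
    have hS_above : {s ∈ insert a S | a < s} = S := filter_lt_insert_of_forall_lt ha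
    rcases lt_or_ge {c ∈ C | a < c}.card S.card with hlt | hge
    · obtain ⟨x, hx, hcard⟩ := ih hlt
      obtain ⟨hxS, hxC⟩ := Finset.mem_sdiff.1 hx
      have hax : a < x := ha x hxS
      refine ⟨x, Finset.mem_sdiff.2 ⟨Finset.mem_insert_of_mem hxS, fun h ↦ ?_⟩, ?_⟩
      · exact hxC (Finset.mem_filter.2 ⟨h, hax⟩)
      · rwa [filter_lt_filter_lt_of_le hax.le, ← hS_above,
          filter_lt_filter_lt_of_le hax.le] at hcard
    · have hC_le : C.card ≤ S.card := by
        rwa [Finset.card_insert_of_notMem ha_notMem, Nat.lt_succ_iff] at hCS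
      have hC_above : {c ∈ C | a < c} = C :=
        Finset.eq_of_subset_of_card_le (Finset.filter_subset _ _) (hC_le.trans hge)
      have haC : a ∉ C := fun h ↦ (Finset.filter_eq_self.1 hC_above a h).false
      refine ⟨a, Finset.mem_sdiff.2 ⟨Finset.mem_insert_self a S, haC⟩, ?_⟩
      rw [hS_above]
      exact le_antisymm (hC_above.symm ▸ hC_le) hge

/-- Let `k ≥ 2` and let `C` and `D` be disjoint finite sets of
integers with `|C| = k−1` and `C` nonempty.  Let `c_max = max C`,
`D_− = {d ∈ D : d < c_max}`, and for an integer `x` set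
`m(x) = |{c ∈ C : c > x}|`.  Then for every `S ⊆ C ∪ D_−` with `|S| = k`
there exists `d ∈ D ∩ S` with `m(d) = |{s ∈ S : s > d}|`. -/
theorem stmt17 (k : ℕ) (hk : 2 ≤ k) (C D : Finset ℤ) (hdisj : Disjoint C D)
    (hCcard : C.card = k - 1) (hCne : C.Nonempty) :
    ∀ S ⊆ C ∪ (D.filter (fun d => d < C.max' hCne)), S.card = k →
      ∃ d ∈ D ∩ S, (C.filter (fun c => d < c)).card = (S.filter (fun s => d < s)).card := by
  intro S hS hScard
  obtain ⟨d, hd, hcard⟩ := stmt17_general (show C.card < S.card by omega)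
  exact ⟨d, by grind, hcard⟩
end
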